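/- arXiv:2009.08606 — 5 statements merged into one kernel-verified Lean document; each statement's English description precedes it below -/
import Mathlib

section
/- Let L, X₁, X₂, X₃, X₄ be random variables on a probability space, each taking only the values 0 and 1, each with nonzero variance, and suppose that for every pair i ≠ j the variables Xᵢ and Xⱼ are conditionally independent given L. Then the three vanishing tetrad constraints hold: Corr(X₁,X₂)·Corr(X₃,X₄) = Corr(X₁,X₃)·Corr(X₂,X₄) = Corr(X₁,X₄)·Corr(X₂,X₃). -/
open MeasureTheory ProbabilityTheory

/-- Covariance: Cov(X,Y) = E[XY] − E[X]E[Y]. -/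
noncomputable def cov {Ω : Type*} [MeasurableSpace Ω] (μ : Measure Ω) (X Y : Ω → ℝ) : ℝ :=
  (∫ ω, X ω * Y ω ∂μ) - (∫ ω, X ω ∂μ) * (∫ ω, Y ω ∂μ)

/-- Standard deviation: the square root of the variance Cov(X,X). -/
noncomputable def stdDev {Ω : Type*} [MeasurableSpace Ω] (μ : Measure Ω) (X : Ω → ℝ) : ℝ :=
  Real.sqrt (cov μ X X)

/-- Pearson correlation coefficient: Corr(X,Y) = Cov(X,Y)/(stdDev(X)·stdDev(Y)). -/
noncomputable def corr {Ω : Type*} [MeasurableSpace Ω] (μ : Measure Ω) (X Y : Ω → ℝ) : ℝ :=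
  cov μ X Y / (stdDev μ X * stdDev μ Y)

/-- A binary random variable takes only the values 0 and 1. -/
def IsBinary {Ω : Type*} (X : Ω → ℝ) : Prop := ∀ ω, X ω = 0 ∨ X ω = 1

/-- Conditional independence of `X` and `Y` given `L`:
`P(X = x, Y = y | L = l) = P(X = x | L = l) · P(Y = y | L = l)` for all values `x, y, l`
with `P(L = l) > 0`. -/
def CondIndepGiven {Ω : Type*} [MeasurableSpace Ω] (μ : Measure Ω) (X Y L : Ω → ℝ) : Prop :=
  ∀ x y l : ℝ, μ {ω | L ω = l} ≠ 0 →
    μ ({ω | X ω = x} ∩ {ω | Y ω = y} ∩ {ω | L ω = l}) / μ {ω | L ω = l} =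
      (μ ({ω | X ω = x} ∩ {ω | L ω = l}) / μ {ω | L ω = l}) *
        (μ ({ω | Y ω = y} ∩ {ω | L ω = l}) / μ {ω | L ω = l})

lemma aux_integral {Ω : Type*} [MeasurableSpace Ω] (μ : Measure Ω) (Z : Ω → ℝ)
    (hZ : Measurable Z) (hb : IsBinary Z) : ∫ ω, Z ω ∂μ = μ.real {ω | Z ω = 1} := by
  have hm : MeasurableSet {ω | Z ω = 1} := hZ (measurableSet_singleton 1)
  have h : Z = Set.indicator {ω | Z ω = 1} 1 := by
    funext ω
    by_cases h1 : Z ω = 1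
    · rw [Set.indicator_of_mem (by exact h1)]; simpa using h1
    · rw [Set.indicator_of_notMem (by exact h1)]; exact (hb ω).resolve_right h1
  calc ∫ ω, Z ω ∂μ = ∫ ω, Set.indicator {ω | Z ω = 1} (1 : Ω → ℝ) ω ∂μ :=
        congrArg (fun f : Ω → ℝ => ∫ ω, f ω ∂μ) h
    _ = _ := integral_indicator_one hm

lemma aux_split {Ω : Type*} [MeasurableSpace Ω] (μ : Measure Ω) [IsProbabilityMeasure μ]
    (L : Ω → ℝ) (hL : Measurable L) (hb : IsBinary L) (A : Set Ω) :
    μ.real A = μ.real (A ∩ {ω | L ω = 0}) + μ.real (A ∩ {ω | L ω = 1}) := by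
  have hm : MeasurableSet {ω | L ω = 0} := hL (measurableSet_singleton 0)
  have hc : A \ {ω | L ω = 0} = A ∩ {ω | L ω = 1} := by
    ext ω
    rcases hb ω with h | h <;> simp [h]
  rw [← hc, measureReal_inter_add_sdiff hm]

lemma aux_ci {Ω : Type*} [MeasurableSpace Ω] (μ : Measure Ω) [IsProbabilityMeasure μ]
    (X Y L : Ω → ℝ) (h : CondIndepGiven μ X Y L) (l : ℝ) (hl : μ.real {ω | L ω = l} ≠ 0) :
    μ.real ({ω | X ω = 1} ∩ {ω | Y ω = 1} ∩ {ω | L ω = l}) =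
      μ.real ({ω | X ω = 1} ∩ {ω | L ω = l}) * μ.real ({ω | Y ω = 1} ∩ {ω | L ω = l})
        / μ.real {ω | L ω = l} := by
  have h0 : μ {ω | L ω = l} ≠ 0 := by
    intro h0; apply hl; simp [Measure.real, h0]
  have := congrArg ENNReal.toReal (h 1 1 l h0)
  simp only [ENNReal.toReal_mul, ENNReal.toReal_div] at this
  simp only [Measure.real] at hl ⊢
  field_simp at this ⊢
  linarith

lemma aux_cov {Ω : Type*} [MeasurableSpace Ω] (μ : Measure Ω) [IsProbabilityMeasure μ]
    (L : Ω → ℝ) (hL : Measurable L) (hLbin : IsBinary L) (hLvar : cov μ L L ≠ 0) :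
    ∃ (k : ℝ) (d : (Ω → ℝ) → ℝ), ∀ X Y : Ω → ℝ, Measurable X → Measurable Y → IsBinary X →
      IsBinary Y → CondIndepGiven μ X Y L → cov μ X Y = k * d X * d Y := by
  have hp : μ.real {ω | L ω = 0} + μ.real {ω | L ω = 1} = 1 := by
    have := aux_split μ L hL hLbin Set.univ
    simpa using this.symm
  have hLL : cov μ L L = μ.real {ω | L ω = 1} * μ.real {ω | L ω = 0} := by
    have h2 : (fun ω => L ω * L ω) = L := by
      funext ω
      rcases hLbin ω with h | h <;> simp [h]
    unfold cov
    rw [h2, aux_integral μ L hL hLbin, eq_sub_of_add_eq hp]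
    ring
  rw [hLL] at hLvar
  have hp1 := left_ne_zero_of_mul hLvar
  have hp0 := right_ne_zero_of_mul hLvar
  refine ⟨μ.real {ω | L ω = 0} * μ.real {ω | L ω = 1},
    fun X => μ.real ({ω | X ω = 1} ∩ {ω | L ω = 0}) / μ.real {ω | L ω = 0}
      - μ.real ({ω | X ω = 1} ∩ {ω | L ω = 1}) / μ.real {ω | L ω = 1}, ?_⟩
  intro X Y hX hY hXb hYb hci
  have hXYb : IsBinary (fun ω => X ω * Y ω) := by
    intro ω
    rcases hXb ω with h | h <;> rcases hYb ω with h' | h' <;> simp [h, h']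
  have hset : {ω | X ω * Y ω = 1} = {ω | X ω = 1} ∩ {ω | Y ω = 1} := by
    ext ω
    rcases hXb ω with h | h <;> rcases hYb ω with h' | h' <;> simp [h, h']
  unfold cov
  beta_reduce
  rw [aux_integral μ (fun ω => X ω * Y ω) (hX.mul hY) hXYb, aux_integral μ X hX hXb, aux_integral μ Y hY hYb, hset,
    aux_split μ L hL hLbin ({ω | X ω = 1} ∩ {ω | Y ω = 1}), aux_ci μ X Y L hci 0 hp0,
    aux_ci μ X Y L hci 1 hp1, aux_split μ L hL hLbin {ω | X ω = 1},
    aux_split μ L hL hLbin {ω | Y ω = 1}]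
  generalize μ.real ({ω | X ω = 1} ∩ {ω | L ω = 0}) = a0
  generalize μ.real ({ω | X ω = 1} ∩ {ω | L ω = 1}) = a1
  generalize μ.real ({ω | Y ω = 1} ∩ {ω | L ω = 0}) = b0
  generalize μ.real ({ω | Y ω = 1} ∩ {ω | L ω = 1}) = b1
  generalize μ.real {ω | L ω = 0} = p at *
  generalize μ.real {ω | L ω = 1} = q at *
  obtain rfl : p = 1 - q := by linarith
  field_simp
  ring

theorem binary_one_factor_model_tetrad_constraints
    {Ω : Type*} [MeasurableSpace Ω] (μ : Measure Ω) [IsProbabilityMeasure μ]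
    (L : Ω → ℝ) (X : Fin 4 → Ω → ℝ)
    (hL : Measurable L) (hX : ∀ i, Measurable (X i))
    (hLbin : IsBinary L) (hXbin : ∀ i, IsBinary (X i))
    (hLvar : cov μ L L ≠ 0) (hXvar : ∀ i, cov μ (X i) (X i) ≠ 0)
    (hCI : ∀ i j : Fin 4, i ≠ j → CondIndepGiven μ (X i) (X j) L) :
    corr μ (X 0) (X 1) * corr μ (X 2) (X 3) = corr μ (X 0) (X 2) * corr μ (X 1) (X 3) ∧
      corr μ (X 0) (X 2) * corr μ (X 1) (X 3) = corr μ (X 0) (X 3) * corr μ (X 1) (X 2) := by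
  obtain ⟨k, d, h⟩ := aux_cov μ L hL hLbin hLvar
  have hc : ∀ i j : Fin 4, i ≠ j → cov μ (X i) (X j) = k * d (X i) * d (X j) := fun i j hij =>
    h _ _ (hX i) (hX j) (hXbin i) (hXbin j) (hCI i j hij)
  unfold corr
  rw [hc 0 1 (by decide), hc 2 3 (by decide), hc 0 2 (by decide), hc 1 3 (by decide),
    hc 0 3 (by decide), hc 1 2 (by decide)]
  simp only [div_mul_div_comm]
  constructor <;> congr 1 <;> ring
end

section
/- Let X and Z be independent standard normal random variables, let ρ ∈ (−1, 1), and define Y = ρ·X + √(1 − ρ²)·Z. Let V = 1_{X > 0} and W = 1_{Y > 0} be the median-dichotomy indicators. Then Cov(V, W) = arcsin(ρ)/(2π). -/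
open MeasureTheory ProbabilityTheory

theorem polar_aux (f : ℝ × ℝ → ℝ)
    (hf : ∀ r : ℝ, 0 < r → ∀ θ : ℝ, f (r * Real.cos θ, r * Real.sin θ) = f (Real.cos θ, Real.sin θ)) :
    ∫ p, f p ∂((gaussianReal 0 1).prod (gaussianReal 0 1)) =
      (∫ r in Set.Ioi (0:ℝ), r * ((2 * Real.pi)⁻¹ * Real.exp (-(r^2) / 2))) *
        ∫ θ in Set.Ioo (-Real.pi) Real.pi, f (Real.cos θ, Real.sin θ) := by
  rw [gaussianReal_of_var_ne_zero 0 one_ne_zero,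
    prod_withDensity (measurable_gaussianPDF _ _) (measurable_gaussianPDF _ _),
    integral_withDensity_eq_integral_toReal_smul]
  rotate_left
  · exact ((measurable_gaussianPDF 0 1).comp measurable_fst).mul
      ((measurable_gaussianPDF 0 1).comp measurable_snd)
  · exact Filter.Eventually.of_forall fun p => ENNReal.mul_lt_top gaussianPDF_lt_top gaussianPDF_lt_top
  rw [← Measure.volume_eq_prod, ← integral_comp_polarCoord_symm, ← setIntegral_prod_mul,
    ← Measure.volume_eq_prod]
  refine setIntegral_congr_fun polarCoord.open_target.measurableSet ?_
  rintro ⟨r, θ⟩ ⟨hr, hθ⟩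
  simp only [Set.mem_Ioi] at hr
  simp only [polarCoord_symm_apply, smul_eq_mul, ENNReal.toReal_mul, toReal_gaussianPDF, hf r hr θ]
  have h : gaussianPDFReal 0 1 (r * Real.cos θ) * gaussianPDFReal 0 1 (r * Real.sin θ) =
      (2 * Real.pi)⁻¹ * Real.exp (-(r^2) / 2) := by
    simp only [gaussianPDFReal, NNReal.coe_one, mul_one, sub_zero]
    rw [mul_mul_mul_comm, ← Real.exp_add, ← mul_inv, Real.mul_self_sqrt (by positivity)]
    congr 2
    have := Real.sin_sq_add_cos_sq θ
    linear_combination (-r^2/2) * this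
  rw [h]; ring

theorem polar_const :
    (∫ r in Set.Ioi (0:ℝ), r * ((2 * Real.pi)⁻¹ * Real.exp (-(r^2) / 2))) = (2 * Real.pi)⁻¹ := by
  have h := polar_aux (fun _ => 1) (by simp)
  have hp := Real.pi_pos
  simp only [integral_const, probReal_univ, smul_eq_mul, mul_one, measureReal_restrict_apply_univ,
    Real.volume_real_Ioo_of_le (show -Real.pi ≤ Real.pi by linarith)] at h
  refine eq_inv_of_mul_eq_one_left ?_
  linarith

theorem polar_ind (P : ℝ × ℝ → Prop) [DecidablePred P] (L : ℝ)
    (hf : ∀ r : ℝ, 0 < r → ∀ θ : ℝ, P (r * Real.cos θ, r * Real.sin θ) ↔ P (Real.cos θ, Real.sin θ))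
    (hL : ∫ θ in Set.Ioo (-Real.pi) Real.pi, (if P (Real.cos θ, Real.sin θ) then (1:ℝ) else 0) = L) :
    ∫ p, (if P p then (1:ℝ) else 0) ∂((gaussianReal 0 1).prod (gaussianReal 0 1)) =
      L / (2 * Real.pi) := by
  rw [polar_aux _ (fun r hr θ => by simp only [hf r hr θ]), polar_const, hL]
  field_simp

theorem ioo_ind (Q : ℝ → Prop) [DecidablePred Q] (a b : ℝ) (hab : a ≤ b) 
    (hQ : ∀ θ ∈ Set.Ioo (-Real.pi) Real.pi, Q θ ↔ θ ∈ Set.Ioo a b)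
    (h1 : -Real.pi ≤ a) (h2 : b ≤ Real.pi) :
    ∫ θ in Set.Ioo (-Real.pi) Real.pi, (if Q θ then (1:ℝ) else 0) = b - a := by
  have : ∫ θ in Set.Ioo (-Real.pi) Real.pi, (if Q θ then (1:ℝ) else 0) =
     ∫ θ in Set.Ioo (-Real.pi) Real.pi, (Set.Ioo a b).indicator (fun _ => (1:ℝ)) θ := by
    refine setIntegral_congr_fun measurableSet_Ioo fun θ hθ => ?_
    simp only [Set.indicator_apply, hQ θ hθ]
  rw [this, setIntegral_indicator measurableSet_Ioo,
    Set.inter_eq_right.2 (Set.Ioo_subset_Ioo h1 h2)]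
  simp [Real.volume_real_Ioo_of_le hab]

theorem cos_pos_iff_aux (θ : ℝ) (hθ : θ ∈ Set.Ioo (-Real.pi) Real.pi) :
    0 < Real.cos θ ↔ θ ∈ Set.Ioo (-(Real.pi/2)) (Real.pi/2) := by
  refine ⟨fun h => ?_, Real.cos_pos_of_mem_Ioo⟩
  have := hθ.1
  have := hθ.2
  by_contra hc
  rw [Set.mem_Ioo, not_and_or, not_lt, not_lt] at hc
  rcases hc with hc | hc
  · have := Real.cos_nonpos_of_pi_div_two_le_of_le (x := -θ) (by linarith) (by linarith)
    rw [Real.cos_neg] at this; linarith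
  · have := Real.cos_nonpos_of_pi_div_two_le_of_le hc (by linarith)
    linarith

theorem sin_pos_iff_aux (θ : ℝ) (hθ : θ ∈ Set.Ioo (-Real.pi) Real.pi) :
    0 < Real.sin θ ↔ θ ∈ Set.Ioo 0 Real.pi := by
  refine ⟨fun h => ⟨?_, hθ.2⟩, Real.sin_pos_of_mem_Ioo⟩
  by_contra hc
  have := Real.sin_nonpos_of_nonpos_of_neg_pi_le (not_lt.1 hc) hθ.1.le
  linarith

theorem cov_median_dichotomies_eq_arcsin
    {Ω : Type*} [MeasurableSpace Ω] (μ : Measure Ω) [IsProbabilityMeasure μ]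
    (X Z : Ω → ℝ) (hX : Measurable X) (hZ : Measurable Z)
    (hXlaw : Measure.map X μ = gaussianReal 0 1)
    (hZlaw : Measure.map Z μ = gaussianReal 0 1)
    (hIndep : IndepFun X Z μ)
    (ρ : ℝ) (hρ : ρ ∈ Set.Ioo (-1 : ℝ) 1)
    (Y : Ω → ℝ) (hY : Y = fun ω => ρ * X ω + Real.sqrt (1 - ρ ^ 2) * Z ω)
    (V W : Ω → ℝ) (hV : V = fun ω => if X ω > 0 then (1 : ℝ) else 0)
    (hW : W = fun ω => if Y ω > 0 then (1 : ℝ) else 0) :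
    cov μ V W = Real.arcsin ρ / (2 * Real.pi) := by
  have hlaw : μ.map (fun ω => (X ω, Z ω)) = (gaussianReal 0 1).prod (gaussianReal 0 1) := by
    rw [(indepFun_iff_map_prod_eq_prod_map_map hX.aemeasurable hZ.aemeasurable).1 hIndep,
      hXlaw, hZlaw]
  set a := Real.arcsin ρ with ha
  have hsin : Real.sin a = ρ := Real.sin_arcsin hρ.1.le hρ.2.le
  have hcos : Real.cos a = Real.sqrt (1 - ρ ^ 2) := Real.cos_arcsin ρ
  have hpi := Real.pi_pos
  have ha1 : -(Real.pi/2) < a := Real.neg_pi_div_two_lt_arcsin.2 hρ.1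
  have ha2 : a < Real.pi/2 := Real.arcsin_lt_pi_div_two.2 hρ.2
  have key : ∀ (P : ℝ × ℝ → Prop) [DecidablePred P], MeasurableSet {p | P p} →
      ∫ ω, (if P (X ω, Z ω) then (1:ℝ) else 0) ∂μ =
      ∫ p, (if P p then (1:ℝ) else 0) ∂((gaussianReal 0 1).prod (gaussianReal 0 1)) := by
    intro P _ hP
    rw [← hlaw, integral_map (hX.prodMk hZ).aemeasurable]
    exact (Measurable.ite hP measurable_const measurable_const).aestronglyMeasurable
  have hsc : ∀ θ : ℝ, ρ * Real.cos θ + Real.sqrt (1 - ρ ^ 2) * Real.sin θ = Real.sin (θ + a) := by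
    intro θ
    rw [Real.sin_add, hsin, hcos]; ring
  have m1 : MeasurableSet {p : ℝ × ℝ | 0 < p.1} := measurableSet_lt measurable_const measurable_fst
  have m2 : MeasurableSet {p : ℝ × ℝ | 0 < ρ * p.1 + Real.sqrt (1 - ρ ^ 2) * p.2} :=
    measurableSet_lt measurable_const (by fun_prop)
  have s1 : ∀ r : ℝ, 0 < r → ∀ θ : ℝ, 0 < r * Real.cos θ ↔ 0 < Real.cos θ :=
    fun r hr θ => mul_pos_iff_of_pos_left hr
  have s2 : ∀ r : ℝ, 0 < r → ∀ θ : ℝ,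
      0 < ρ * (r * Real.cos θ) + Real.sqrt (1 - ρ ^ 2) * (r * Real.sin θ) ↔
      0 < ρ * Real.cos θ + Real.sqrt (1 - ρ ^ 2) * Real.sin θ := by
    intro r hr θ
    rw [← mul_pos_iff_of_pos_left hr (b := ρ * Real.cos θ + Real.sqrt (1 - ρ ^ 2) * Real.sin θ)]
    ring_nf
  have EV : ∫ ω, V ω ∂μ = Real.pi / (2 * Real.pi) := by
    subst hV
    refine (key (fun p => 0 < p.1) m1).trans (polar_ind _ _ s1 ?_)
    rw [ioo_ind _ (-(Real.pi/2)) (Real.pi/2) (by linarith) cos_pos_iff_aux (by linarith)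
      (by linarith)]
    ring
  have EW : ∫ ω, W ω ∂μ = Real.pi / (2 * Real.pi) := by
    subst hW hY
    refine (key (fun p => 0 < ρ * p.1 + Real.sqrt (1 - ρ ^ 2) * p.2) m2).trans
      (polar_ind _ _ s2 ?_)
    simp only [hsc]
    have hs := ioo_ind (fun θ => 0 < Real.sin θ) 0 Real.pi hpi.le sin_pos_iff_aux
      (by linarith) le_rfl
    rw [sub_zero] at hs
    rw [← integral_Ioc_eq_integral_Ioo, ← intervalIntegral.integral_of_le (by linarith)] at hs ⊢
    have hper : Function.Periodic (fun θ => if 0 < Real.sin θ then (1:ℝ) else 0)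
        (2 * Real.pi) := fun θ => by simp only [Real.sin_add_two_pi]
    rw [intervalIntegral.integral_comp_add_right (fun θ => if 0 < Real.sin θ then (1:ℝ) else 0) a]
    have := hper.intervalIntegral_add_eq (-Real.pi + a) (-Real.pi)
    rw [show -Real.pi + a + 2 * Real.pi = Real.pi + a by ring,
      show -Real.pi + 2 * Real.pi = Real.pi by ring] at this
    rw [this, hs]
  have EVW : ∫ ω, V ω * W ω ∂μ = (Real.pi / 2 + a) / (2 * Real.pi) := by
    have : (fun ω => V ω * W ω) = fun ω => if (0 < X ω ∧
        0 < ρ * X ω + Real.sqrt (1 - ρ ^ 2) * Z ω) then (1:ℝ) else 0 := by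
      subst hV hW hY
      funext ω
      simp only [gt_iff_lt, ite_and, ite_mul, one_mul, zero_mul]
    rw [this]
    refine (key (fun p => 0 < p.1 ∧ 0 < ρ * p.1 + Real.sqrt (1 - ρ ^ 2) * p.2)
      (m1.inter m2)).trans
      (polar_ind _ _ (fun r hr θ => and_congr (s1 r hr θ) (s2 r hr θ)) ?_)
    rw [ioo_ind _ (-a) (Real.pi/2) (by linarith) ?_ (by linarith) (by linarith)]
    · ring
    intro θ hθ
    simp only [hsc]
    rw [cos_pos_iff_aux θ hθ]
    constructor
    · rintro ⟨h1, h2⟩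
      have := (sin_pos_iff_aux (θ + a) ⟨by linarith [h1.1], by linarith [h1.2]⟩).1 h2
      exact ⟨by linarith [this.1], h1.2⟩
    · rintro ⟨h1, h2⟩
      exact ⟨⟨by linarith, h2⟩, Real.sin_pos_of_mem_Ioo ⟨by linarith, by linarith⟩⟩
  rw [cov, EV, EW, EVW]
  field_simp
  ring
end

section
/- Let X and Z be independent standard normal random variables, let ρ ∈ (−1, 1), and define Y = ρ·X + √(1 − ρ²)·Z. Then the positive-orthant probability satisfies P(X > 0, Y > 0) = 1/4 + arcsin(ρ)/(2π). -/
open MeasureTheory ProbabilityTheory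

lemma aux_set (α r θ : ℝ) (h1 : -(Real.pi / 2) < α) (h2 : α < Real.pi / 2) (hr : 0 < r)
    (hθ : θ ∈ Set.Ioo (-Real.pi) Real.pi) :
    (r * Real.cos θ > 0 ∧ Real.sin α * (r * Real.cos θ) + Real.cos α * (r * Real.sin θ) > 0)
      ↔ θ ∈ Set.Ioo (-α) (Real.pi / 2) := by
  have hpi := Real.pi_pos
  have e : Real.sin α * (r * Real.cos θ) + Real.cos α * (r * Real.sin θ)
      = r * Real.sin (θ + α) := by rw [Real.sin_add]; ring
  rw [e, gt_iff_lt, gt_iff_lt, mul_pos_iff_of_pos_left hr, mul_pos_iff_of_pos_left hr]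
  obtain ⟨ha, hb⟩ := hθ
  constructor
  · rintro ⟨hc, hs⟩
    have k1 : θ < Real.pi / 2 := by
      by_contra! h
      exact absurd hc (not_lt.2 (Real.cos_nonpos_of_pi_div_two_le_of_le h (by linarith)))
    have k2 : -(Real.pi / 2) < θ := by
      by_contra! h
      rw [← Real.cos_neg] at hc
      exact absurd hc (not_lt.2
        (Real.cos_nonpos_of_pi_div_two_le_of_le (by linarith) (by linarith)))
    refine ⟨?_, k1⟩
    by_contra! h
    exact absurd hs (not_lt.2
      (Real.sin_nonpos_of_nonpos_of_neg_pi_le (by linarith) (by linarith)))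
  · rintro ⟨k1, k2⟩
    exact ⟨Real.cos_pos_of_mem_Ioo ⟨by linarith, k2⟩,
      Real.sin_pos_of_pos_of_lt_pi (by linarith) (by linarith)⟩

lemma aux_radial : ∫ r in Set.Ioi (0 : ℝ), r * Real.exp (-r ^ 2 / 2) = 1 := by
  have h := integral_rpow_mul_exp_neg_mul_rpow (p := 2) (q := 1) (b := 1 / 2)
    (by norm_num) (by norm_num) (by norm_num)
  rw [show ((1 : ℝ) + 1) / 2 = 1 by norm_num, Real.Gamma_one] at h
  rw [show (1 : ℝ) = (1 / 2 : ℝ) ^ (-(1 + 1) / 2 : ℝ) * (1 / 2) * 1 by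
    rw [show (-(1 + 1) / 2 : ℝ) = -1 by norm_num, Real.rpow_neg_one]; norm_num, ← h]
  refine setIntegral_congr_fun measurableSet_Ioi fun r _ => ?_
  simp only [Real.rpow_one, Real.rpow_two]
  congr 2
  ring

lemma aux_pdf (p : ℝ × ℝ) : gaussianPDFReal 0 1 p.1 * gaussianPDFReal 0 1 p.2
    = (2 * Real.pi)⁻¹ * Real.exp (-(p.1 ^ 2 + p.2 ^ 2) / 2) := by
  have hpi := Real.pi_pos
  simp only [gaussianPDFReal, NNReal.coe_one, mul_one, sub_zero]
  rw [mul_mul_mul_comm, ← Real.exp_add, ← mul_inv, Real.mul_self_sqrt (by positivity)]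
  congr 2
  ring

lemma aux_gauss (α : ℝ) (h1 : -(Real.pi / 2) < α) (h2 : α < Real.pi / 2) :
    (((gaussianReal 0 1).prod (gaussianReal 0 1))
      {p : ℝ × ℝ | p.1 > 0 ∧ Real.sin α * p.1 + Real.cos α * p.2 > 0}).toReal
      = 1 / 4 + α / (2 * Real.pi) := by
  have hpi := Real.pi_pos
  set S := {p : ℝ × ℝ | p.1 > 0 ∧ Real.sin α * p.1 + Real.cos α * p.2 > 0} with hS
  have hSm : MeasurableSet S :=
    (measurableSet_lt measurable_const measurable_fst).inter
      (measurableSet_lt measurable_const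
        (by fun_prop : Measurable fun p : ℝ × ℝ => Real.sin α * p.1 + Real.cos α * p.2))
  rw [gaussianReal_of_var_ne_zero _ one_ne_zero,
    prod_withDensity (measurable_gaussianPDF _ _) (measurable_gaussianPDF _ _),
    withDensity_apply _ hSm]
  have e1 : ∀ p : ℝ × ℝ, gaussianPDF 0 1 p.1 * gaussianPDF 0 1 p.2
      = ENNReal.ofReal ((2 * Real.pi)⁻¹ * Real.exp (-(p.1 ^ 2 + p.2 ^ 2) / 2)) := by
    intro p
    rw [gaussianPDF, gaussianPDF, ← ENNReal.ofReal_mul (gaussianPDFReal_nonneg _ _ _), aux_pdf]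
  simp_rw [e1]
  rw [← integral_eq_lintegral_of_nonneg_ae (Filter.Eventually.of_forall fun p => by positivity)
    (by fun_prop), ← integral_indicator hSm, ← Measure.volume_eq_prod,
    ← integral_comp_polarCoord_symm]
  have e2 : ∀ p ∈ polarCoord.target,
      p.1 • S.indicator (fun p : ℝ × ℝ => (2 * Real.pi)⁻¹ * Real.exp (-(p.1 ^ 2 + p.2 ^ 2) / 2))
        (polarCoord.symm p)
      = (p.1 * Real.exp (-p.1 ^ 2 / 2)) *
        (Set.Ioo (-α) (Real.pi / 2)).indicator (fun _ => (2 * Real.pi)⁻¹) p.2 := by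
    rintro ⟨r, θ⟩ ⟨hr, hθ⟩
    have key := aux_set α r θ h1 h2 hr hθ
    simp only [polarCoord_symm_apply, smul_eq_mul]
    by_cases hm : θ ∈ Set.Ioo (-α) (Real.pi / 2)
    · rw [Set.indicator_of_mem hm, Set.indicator_of_mem (show _ ∈ S from key.2 hm)]
      have : (r * Real.cos θ) ^ 2 + (r * Real.sin θ) ^ 2 = r ^ 2 := by
        linear_combination r ^ 2 * Real.cos_sq_add_sin_sq θ
      simp only [this]
      ring
    · rw [Set.indicator_of_notMem hm, Set.indicator_of_notMem
        (show (r * Real.cos θ, r * Real.sin θ) ∉ S from fun h => hm (key.1 h))]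
      simp
  rw [setIntegral_congr_fun polarCoord.open_target.measurableSet e2, polarCoord_target,
    Measure.volume_eq_prod,
    setIntegral_prod_mul (fun r : ℝ => r * Real.exp (-r ^ 2 / 2)), aux_radial, one_mul,
    setIntegral_indicator measurableSet_Ioo, Set.inter_eq_right.2
      (Set.Ioo_subset_Ioo (by linarith) (by linarith)), setIntegral_const]
  simp only [Measure.real, Real.volume_Ioo, smul_eq_mul]
  rw [ENNReal.toReal_ofReal (by linarith)]
  field_simp
  ring

theorem positive_orthant_probability
    {Ω : Type*} [MeasurableSpace Ω] (μ : Measure Ω) [IsProbabilityMeasure μ]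
    (X Z : Ω → ℝ) (hX : Measurable X) (hZ : Measurable Z)
    (hXlaw : Measure.map X μ = gaussianReal 0 1)
    (hZlaw : Measure.map Z μ = gaussianReal 0 1)
    (hIndep : IndepFun X Z μ)
    (ρ : ℝ) (hρ : ρ ∈ Set.Ioo (-1 : ℝ) 1)
    (Y : Ω → ℝ) (hY : Y = fun ω => ρ * X ω + Real.sqrt (1 - ρ ^ 2) * Z ω) :
    (μ {ω | X ω > 0 ∧ Y ω > 0}).toReal = 1 / 4 + Real.arcsin ρ / (2 * Real.pi) := by
  have h := aux_gauss (Real.arcsin ρ) (Real.neg_pi_div_two_lt_arcsin.2 hρ.1)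
    (Real.arcsin_lt_pi_div_two.2 hρ.2)
  have hl := (indepFun_iff_map_prod_eq_prod_map_map hX.aemeasurable hZ.aemeasurable).1 hIndep
  rw [hXlaw, hZlaw] at hl
  rw [← h, ← hl, Real.sin_arcsin hρ.1.le hρ.2.le, Real.cos_arcsin,
    Measure.map_apply (hX.prodMk hZ)]
  · subst hY
    rfl
  · exact (measurableSet_lt measurable_const measurable_fst).inter
      (measurableSet_lt measurable_const
        (by fun_prop : Measurable fun p : ℝ × ℝ => ρ * p.1 + Real.sqrt (1 - ρ ^ 2) * p.2))
end

section
/- Let X and Z be independent standard normal random variables, let ρ ∈ (−1, 1), and for r ∈ [0,1) define Y_r = r·X + √(1 − r²)·Z. Then for all real numbers s and t, P(X > s, Y_ρ > t) − P(X > s)·P(Y_ρ > t) = ∫₀^ρ (2π√(1 − r²))^{−1} · exp(−(s² − 2rst + t²)/(2(1 − r²))) dr; that is, the covariance of the threshold indicators 1_{X > s} and 1_{Y_ρ > t} equals the integral of the standard bivariate normal density ψ(s, t, r) over correlations r from 0 to ρ. -/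
open MeasureTheory ProbabilityTheory

/-- standard normal density -/
noncomputable def phiStd (x : ℝ) : ℝ := (Real.sqrt (2 * Real.pi))⁻¹ * Real.exp (-x ^ 2 / 2)

/-- standard normal tail -/
noncomputable def tailStd (a : ℝ) : ℝ := ∫ x in Set.Ioi a, phiStd x

lemma gaussianPDFReal_eq_phiStd : gaussianPDFReal 0 1 = phiStd := by
  ext x
  simp [gaussianPDFReal_def, phiStd]

lemma phiStd_continuous : Continuous phiStd := by
  unfold phiStd; fun_prop

lemma phiStd_nonneg (x : ℝ) : 0 ≤ phiStd x := by
  unfold phiStd; positivity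

lemma phiStd_le_one (x : ℝ) : phiStd x ≤ 1 := by
  unfold phiStd
  have h1 : (Real.sqrt (2 * Real.pi))⁻¹ ≤ 1 := by
    apply inv_le_one_of_one_le₀
    rw [Real.one_le_sqrt]
    linarith [Real.pi_gt_three]
  have h2 : Real.exp (-x ^ 2 / 2) ≤ 1 := by
    rw [Real.exp_le_one_iff]
    have := sq_nonneg x
    linarith
  exact mul_le_one₀ h1 (Real.exp_pos _).le h2

lemma phiStd_integrable : Integrable phiStd := by
  rw [← gaussianPDFReal_eq_phiStd]; exact integrable_gaussianPDFReal 0 1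

lemma mul_phiStd_integrable : Integrable (fun x => x * phiStd x) := by
  have h := (integrable_mul_exp_neg_mul_sq (b := 1 / 2) (by norm_num)).const_mul
    (Real.sqrt (2 * Real.pi))⁻¹
  refine h.congr (Filter.Eventually.of_forall fun x => ?_)
  simp only [phiStd]
  rw [show -(1 / 2) * x ^ 2 = -x ^ 2 / 2 by ring]
  ring

lemma phiStd_tendsto : Filter.Tendsto phiStd Filter.atTop (nhds 0) := by
  have h : Filter.Tendsto (fun x : ℝ => -x ^ 2 / 2) Filter.atTop Filter.atBot := by
    have h1 : Filter.Tendsto (fun x : ℝ => x ^ 2 / 2) Filter.atTop Filter.atTop :=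
      (Filter.tendsto_pow_atTop (by norm_num)).atTop_div_const (by norm_num)
    have h2 := Filter.tendsto_neg_atTop_atBot.comp h1
    refine h2.congr fun x => ?_
    simp only [Function.comp]; ring
  have := (Real.tendsto_exp_atBot.comp h).const_mul (Real.sqrt (2 * Real.pi))⁻¹
  rw [mul_zero] at this
  exact this

lemma phiStd_hasDerivAt (x : ℝ) : HasDerivAt phiStd (-x * phiStd x) x := by
  have h : HasDerivAt (fun x : ℝ => -x ^ 2 / 2) (-x) x := by
    have := ((hasDerivAt_pow 2 x).neg).div_const 2
    refine this.congr_deriv ?_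
    simp
    ring
  have h2 := h.exp.const_mul (Real.sqrt (2 * Real.pi))⁻¹
  refine h2.congr_deriv ?_
  simp only [phiStd]; ring

lemma gauss_Ioi (a : ℝ) : (gaussianReal 0 1 (Set.Ioi a)).toReal = tailStd a := by
  rw [gaussianReal_apply_eq_integral 0 one_ne_zero, gaussianPDFReal_eq_phiStd,
    ENNReal.toReal_ofReal]
  · rfl
  · exact integral_nonneg phiStd_nonneg

lemma tailStd_nonneg (a : ℝ) : 0 ≤ tailStd a := integral_nonneg phiStd_nonneg

lemma tailStd_le_one (a : ℝ) : tailStd a ≤ 1 := by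
  rw [← gauss_Ioi]
  exact ENNReal.toReal_le_of_le_ofReal zero_le_one (by simpa using prob_le_one)

lemma tailStd_hasDerivAt (a : ℝ) : HasDerivAt tailStd (-phiStd a) a := by
  have h : tailStd = fun b => tailStd 0 - ∫ x in (0 : ℝ)..b, phiStd x := by
    ext b
    have := intervalIntegral.integral_interval_add_Ioi (a := 0) (b := b) (f := phiStd)
      (μ := volume) phiStd_integrable.integrableOn phiStd_integrable.integrableOn
    unfold tailStd
    linarith
  rw [h]
  exact (intervalIntegral.integral_hasDerivAt_right
    (phiStd_continuous.intervalIntegrable _ _)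
    (phiStd_continuous.stronglyMeasurableAtFilter _ _)
    phiStd_continuous.continuousAt).const_sub _

lemma tailStd_continuous : Continuous tailStd :=
  continuous_iff_continuousAt.2 fun a => (tailStd_hasDerivAt a).continuousAt

/-- the joint tail -/
noncomputable def jointTail (s t r : ℝ) : ℝ :=
  ∫ x in Set.Ioi s, phiStd x * tailStd ((t - r * x) / Real.sqrt (1 - r ^ 2))

lemma arg_hasDerivAt (t x r : ℝ) (hr : 0 < 1 - r ^ 2) :
    HasDerivAt (fun r => (t - r * x) / Real.sqrt (1 - r ^ 2))
      ((r * t - x) / Real.sqrt (1 - r ^ 2) ^ 3) r := by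
  have hc : 0 < Real.sqrt (1 - r ^ 2) := Real.sqrt_pos.2 hr
  have hc2 : Real.sqrt (1 - r ^ 2) ^ 2 = 1 - r ^ 2 := Real.sq_sqrt hr.le
  have h1 : HasDerivAt (fun r : ℝ => 1 - r ^ 2) (-(2 * r)) r := by
    have := (hasDerivAt_pow 2 r).const_sub 1
    refine this.congr_deriv ?_
    simp
  have h2 := h1.sqrt hr.ne'
  have h3 : HasDerivAt (fun r : ℝ => t - r * x) (-x) r := by
    have := ((hasDerivAt_id r).mul_const x).const_sub t
    refine this.congr_deriv ?_
    simp
  have h4 := h3.div h2 hc.ne'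
  refine h4.congr_deriv ?_
  generalize Real.sqrt (1 - r ^ 2) = c at hc hc2
  field_simp
  have : c ^ 2 = 1 - r ^ 2 := hc2
  rw [this]; ring

lemma psi_hasDerivAt (t r x : ℝ) (hr : 0 < 1 - r ^ 2) :
    HasDerivAt (fun x => -(phiStd x * phiStd ((t - r * x) / Real.sqrt (1 - r ^ 2)) /
        Real.sqrt (1 - r ^ 2)))
      (phiStd x * (-phiStd ((t - r * x) / Real.sqrt (1 - r ^ 2)) *
        ((r * t - x) / Real.sqrt (1 - r ^ 2) ^ 3))) x := by
  have hc : 0 < Real.sqrt (1 - r ^ 2) := Real.sqrt_pos.2 hr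
  have hc2 : Real.sqrt (1 - r ^ 2) ^ 2 = 1 - r ^ 2 := Real.sq_sqrt hr.le
  generalize Real.sqrt (1 - r ^ 2) = c at hc hc2
  have h3 : HasDerivAt (fun x : ℝ => (t - r * x) / c) (-r / c) x := by
    have := (((hasDerivAt_id x).const_mul r).const_sub t).div_const c
    refine this.congr_deriv ?_
    simp
  have h4 := (((phiStd_hasDerivAt x).mul ((phiStd_hasDerivAt _).comp x h3)).div_const c).neg
  refine h4.congr_deriv ?_
  simp only [Function.comp]
  generalize phiStd ((t - r * x) / c) = A
  field_simp
  rw [hc2]; ring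

lemma psi_eq (s t r : ℝ) (hr : 0 < 1 - r ^ 2) :
    phiStd s * phiStd ((t - r * s) / Real.sqrt (1 - r ^ 2)) / Real.sqrt (1 - r ^ 2) =
      (2 * Real.pi * Real.sqrt (1 - r ^ 2))⁻¹ *
          Real.exp (-(s ^ 2 - 2 * r * s * t + t ^ 2) / (2 * (1 - r ^ 2))) := by
  have hc : 0 < Real.sqrt (1 - r ^ 2) := Real.sqrt_pos.2 hr
  have hc2 : Real.sqrt (1 - r ^ 2) ^ 2 = 1 - r ^ 2 := Real.sq_sqrt hr.le
  rw [← hc2]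
  simp only [Real.sqrt_sq hc.le]
  generalize Real.sqrt (1 - r ^ 2) = c at hc hc2
  have he : -(s ^ 2 - 2 * r * s * t + t ^ 2) / (2 * c ^ 2) =
      -s ^ 2 / 2 + -((t - r * s) / c) ^ 2 / 2 := by
    field_simp
    rw [hc2]; ring
  have hp : Real.sqrt (2 * Real.pi) * Real.sqrt (2 * Real.pi) = 2 * Real.pi :=
    Real.mul_self_sqrt (by positivity)
  rw [he, Real.exp_add, ← hp]
  simp only [phiStd]
  have : 0 < Real.sqrt (2 * Real.pi) := Real.sqrt_pos.2 (by positivity)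
  field_simp

lemma jointTail_hasDerivAt (s t r : ℝ) (hr : r ∈ Set.Ioo (-1 : ℝ) 1) :
    HasDerivAt (jointTail s t)
      ((2 * Real.pi * Real.sqrt (1 - r ^ 2))⁻¹ *
          Real.exp (-(s ^ 2 - 2 * r * s * t + t ^ 2) / (2 * (1 - r ^ 2)))) r := by
  have hr0 : 0 < 1 - r ^ 2 := by nlinarith [hr.1, hr.2]
  obtain ⟨R, hR1, hR2⟩ := exists_between (abs_lt.2 ⟨hr.1, hr.2⟩)
  have hR0 : 0 ≤ R := (abs_nonneg r).trans hR1.le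
  have hRR : 0 < 1 - R ^ 2 := by nlinarith
  have hcR : 0 < Real.sqrt (1 - R ^ 2) := Real.sqrt_pos.2 hRR
  have hin : ∀ y ∈ Set.Ioo (-R) R, 1 - R ^ 2 ≤ 1 - y ^ 2 := by
    intro y hy
    nlinarith [hy.1, hy.2]
  have key := hasDerivAt_integral_of_dominated_loc_of_deriv_le (𝕜 := ℝ)
    (μ := volume.restrict (Set.Ioi s)) (s := Set.Ioo (-R) R) (x₀ := r)
    (F := fun r x => phiStd x * tailStd ((t - r * x) / Real.sqrt (1 - r ^ 2)))
    (F' := fun r x => phiStd x * (-phiStd ((t - r * x) / Real.sqrt (1 - r ^ 2)) *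
        ((r * t - x) / Real.sqrt (1 - r ^ 2) ^ 3)))
    (bound := fun x => (|t| * phiStd x + |x * phiStd x|) / Real.sqrt (1 - R ^ 2) ^ 3)
    (isOpen_Ioo.mem_nhds (abs_lt.1 hR1))
    ?_ ?_ ?_ ?_ ?_ ?_
  · obtain ⟨hint, hder⟩ := key
    rw [← psi_eq s t r hr0]
    have hlim : Filter.Tendsto (fun x => -(phiStd x *
        phiStd ((t - r * x) / Real.sqrt (1 - r ^ 2)) / Real.sqrt (1 - r ^ 2)))
        Filter.atTop (nhds 0) := by
      have h0 : Filter.Tendsto (fun x => phiStd x *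
          phiStd ((t - r * x) / Real.sqrt (1 - r ^ 2))) Filter.atTop (nhds 0) :=
        squeeze_zero (fun x => mul_nonneg (phiStd_nonneg _) (phiStd_nonneg _))
          (fun x => mul_le_of_le_one_right (phiStd_nonneg _) (phiStd_le_one _)) phiStd_tendsto
      simpa using (h0.div_const (Real.sqrt (1 - r ^ 2))).neg
    have hval := integral_Ioi_of_hasDerivAt_of_tendsto' (a := s)
      (fun x _ => psi_hasDerivAt t r x hr0) hint hlim
    rw [hval] at hder
    rw [zero_sub, neg_neg] at hder
    exact hder
  · refine Filter.Eventually.of_forall fun y => Continuous.aestronglyMeasurable ?_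
    exact phiStd_continuous.mul (tailStd_continuous.comp (by fun_prop))
  · refine Integrable.mono' (g := phiStd) phiStd_integrable.restrict
      (Continuous.aestronglyMeasurable
        (phiStd_continuous.mul (tailStd_continuous.comp (by fun_prop))))
      (Filter.Eventually.of_forall fun x => ?_)
    rw [Real.norm_of_nonneg (mul_nonneg (phiStd_nonneg _) (tailStd_nonneg _))]
    exact mul_le_of_le_one_right (phiStd_nonneg _) (tailStd_le_one _)
  · refine Continuous.aestronglyMeasurable ?_
    exact phiStd_continuous.mul ((phiStd_continuous.comp (by fun_prop)).neg.mul (by fun_prop))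
  · refine Filter.Eventually.of_forall fun x y hy => ?_
    have hcy : Real.sqrt (1 - R ^ 2) ≤ Real.sqrt (1 - y ^ 2) := Real.sqrt_le_sqrt (hin y hy)
    have hcy0 := hcR.trans_le hcy
    rw [Real.norm_eq_abs, abs_mul, abs_mul, abs_neg, abs_of_nonneg (phiStd_nonneg _),
      abs_of_nonneg (phiStd_nonneg _), abs_div, abs_of_pos (pow_pos hcy0 3), abs_mul,
      abs_of_nonneg (phiStd_nonneg _)]
    have hnum : |y * t - x| ≤ |t| + |x| := by
      have h1 : |y * t| ≤ |t| := by
        rw [abs_mul]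
        have : |y| ≤ 1 := abs_le.2 ⟨by linarith [hy.1], by linarith [hy.2]⟩
        exact mul_le_of_le_one_left (abs_nonneg t) this
      exact (abs_sub _ _).trans (by linarith)
    calc _ ≤ phiStd x * (1 * ((|t| + |x|) / Real.sqrt (1 - R ^ 2) ^ 3)) := by
          apply mul_le_mul_of_nonneg_left _ (phiStd_nonneg _)
          apply mul_le_mul (phiStd_le_one _) _ (by positivity) zero_le_one
          exact div_le_div₀ (by positivity) hnum (pow_pos hcR 3) (by gcongr)
      _ = _ := by ring
  · exact (((phiStd_integrable.const_mul |t|).add mul_phiStd_integrable.abs).div_const _).restrict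
  · refine Filter.Eventually.of_forall fun x y hy => ?_
    exact ((tailStd_hasDerivAt _).comp y
      (arg_hasDerivAt t x y (hRR.trans_le (hin y hy)))).const_mul _

lemma jointTail_zero (s t : ℝ) : jointTail s t 0 = tailStd s * tailStd t := by
  simp [jointTail, integral_mul_const, tailStd]

lemma prod_eq_jointTail (s t r : ℝ) (hr : 0 < 1 - r ^ 2) :
    (((gaussianReal 0 1).prod (gaussianReal 0 1))
      {p : ℝ × ℝ | p.1 > s ∧ r * p.1 + Real.sqrt (1 - r ^ 2) * p.2 > t}).toReal =
      jointTail s t r := by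
  have hc : 0 < Real.sqrt (1 - r ^ 2) := Real.sqrt_pos.2 hr
  have hS : MeasurableSet
      {p : ℝ × ℝ | p.1 > s ∧ r * p.1 + Real.sqrt (1 - r ^ 2) * p.2 > t} :=
    (measurableSet_lt measurable_const measurable_fst).inter
      (measurableSet_lt measurable_const
        ((measurable_fst.const_mul r).add (measurable_snd.const_mul _)))
  rw [Measure.prod_apply hS, ← integral_toReal (measurable_measure_prodMk_left hS).aemeasurable
    (Filter.Eventually.of_forall fun x => measure_lt_top _ _),
    integral_gaussianReal_eq_integral_smul one_ne_zero, gaussianPDFReal_eq_phiStd, jointTail,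
    ← integral_indicator measurableSet_Ioi]
  congr 1
  ext x
  by_cases hx : x > s
  · rw [Set.indicator_of_mem (show x ∈ Set.Ioi s from hx), ← gauss_Ioi, smul_eq_mul]
    congr 3
    ext z
    simp only [Set.mem_preimage, Set.mem_ofPred_eq, Set.mem_Ioi, hx, true_and, gt_iff_lt,
      div_lt_iff₀ hc]
    constructor <;> intro h <;> linarith
  · rw [Set.indicator_of_notMem (show x ∉ Set.Ioi s from hx)]
    simp [hx]

theorem indicator_cov_eq_integral_of_bivariate_density
    {Ω : Type*} [MeasurableSpace Ω] (μ : Measure Ω) [IsProbabilityMeasure μ]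
    (X Z : Ω → ℝ) (hX : Measurable X) (hZ : Measurable Z)
    (hXlaw : Measure.map X μ = gaussianReal 0 1)
    (hZlaw : Measure.map Z μ = gaussianReal 0 1)
    (hIndep : IndepFun X Z μ)
    (ρ : ℝ) (hρ : ρ ∈ Set.Ioo (-1 : ℝ) 1)
    (Y : ℝ → Ω → ℝ) (hY : ∀ r, Y r = fun ω => r * X ω + Real.sqrt (1 - r ^ 2) * Z ω)
    (s t : ℝ) :
    (μ {ω | X ω > s ∧ Y ρ ω > t}).toReal -
        (μ {ω | X ω > s}).toReal * (μ {ω | Y ρ ω > t}).toReal =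
      ∫ r in (0 : ℝ)..ρ,
        (2 * Real.pi * Real.sqrt (1 - r ^ 2))⁻¹ *
          Real.exp (-(s ^ 2 - 2 * r * s * t + t ^ 2) / (2 * (1 - r ^ 2))) := by
  have hpos : ∀ r ∈ Set.uIcc 0 ρ, r ∈ Set.Ioo (-1 : ℝ) 1 := fun r hr =>
    (Set.ordConnected_Ioo.uIcc_subset (by norm_num) hρ) hr
  have hρ0 : 0 < 1 - ρ ^ 2 := by nlinarith [hρ.1, hρ.2]
  rw [intervalIntegral.integral_eq_sub_of_hasDerivAt
    (fun r hr => jointTail_hasDerivAt s t r (hpos r hr)), jointTail_zero]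
  · have h1 : (μ {ω | X ω > s}).toReal = tailStd s := by
      rw [← gauss_Ioi, ← hXlaw, Measure.map_apply hX measurableSet_Ioi]; rfl
    have h2 : (μ {ω | Y ρ ω > t}).toReal = tailStd t := by
      have hlaw : μ.map (Y ρ) = gaussianReal 0 1 := by
        have hA := gaussianReal_const_mul (P := μ) ⟨hX.aemeasurable, hXlaw⟩ ρ
        have hB := gaussianReal_const_mul (P := μ) ⟨hZ.aemeasurable, hZlaw⟩
          (Real.sqrt (1 - ρ ^ 2))
        have hI : IndepFun (fun ω => ρ * X ω) (fun ω => Real.sqrt (1 - ρ ^ 2) * Z ω) μ :=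
          hIndep.comp (measurable_const_mul ρ) (measurable_const_mul _)
        have := gaussianReal_add_gaussianReal_of_indepFun hI hA.map_eq hB.map_eq
        rw [hY ρ]
        refine this.trans ?_
        congr 1
        · simp
        · ext
          simp [Real.sq_sqrt hρ0.le]
      have hYm : Measurable (Y ρ) := by rw [hY ρ]; fun_prop
      rw [← gauss_Ioi, ← hlaw, Measure.map_apply hYm measurableSet_Ioi]; rfl
    have h3 : (μ {ω | X ω > s ∧ Y ρ ω > t}).toReal = jointTail s t ρ := by
      have hp := (indepFun_iff_map_prod_eq_prod_map_map hX.aemeasurable hZ.aemeasurable).1 hIndep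
      rw [hXlaw, hZlaw] at hp
      rw [← prod_eq_jointTail s t ρ hρ0, ← hp, Measure.map_apply (hX.prodMk hZ), hY ρ]
      · rfl
      · exact (measurableSet_lt measurable_const measurable_fst).inter
          (measurableSet_lt measurable_const
            ((measurable_fst.const_mul ρ).add (measurable_snd.const_mul _)))
    rw [h1, h2, h3]
  · apply ContinuousOn.intervalIntegrable
    have hq : ∀ r ∈ Set.uIcc 0 ρ, 0 < 1 - r ^ 2 := fun r hr => by
      nlinarith [(hpos r hr).1, (hpos r hr).2]
    refine ContinuousOn.mul (ContinuousOn.inv₀ (by fun_prop) fun r hr => ?_)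
      (ContinuousOn.rexp (ContinuousOn.div (by fun_prop) (by fun_prop) fun r hr => ?_))
    · have := Real.sqrt_pos.2 (hq r hr)
      positivity
    · have := hq r hr
      positivity
end

section
/- For every real number x with |x| ≤ 0.65, the relative error of the linear approximation of arcsine is at most 10%: |arcsin(x) − x| ≤ 0.1·|x|. -/
theorem arcsin_aux (x : ℝ) (h0 : 0 < x) (hx : x ≤ 0.65) :
    |Real.arcsin x - x| ≤ 0.1 * x := by
  norm_num at hx
  have hpi := Real.pi_gt_three
  have h1 : x ≤ Real.arcsin x := by
    rw [Real.le_arcsin_iff_sin_le ⟨by linarith, by linarith⟩ ⟨by linarith, by linarith⟩]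
    exact (Real.sin_lt h0).le
  have h2 : Real.arcsin x ≤ 1.1 * x := by
    rw [Real.arcsin_le_iff_le_sin ⟨by linarith, by linarith⟩
      ⟨by norm_num; linarith, by norm_num; linarith⟩]
    have h3 := Real.sin_gt_sub_cube (x := 1.1 * x) (by positivity)
    have h4 : x ^ 2 ≤ 0.4225 := by norm_num; nlinarith
    have h5 : x * x ^ 2 ≤ x * 0.4225 := mul_le_mul_of_nonneg_left h4 h0.le
    norm_num at h3 h5 ⊢
    nlinarith
  rw [abs_of_nonneg (by linarith)]
  norm_num at h2 ⊢
  linarith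

theorem arcsin_linear_approx_relative_error
    (x : ℝ) (hx : |x| ≤ 0.65) : |Real.arcsin x - x| ≤ 0.1 * |x| := by
  rcases lt_trichotomy x 0 with h | h | h
  · rw [abs_of_neg h] at hx ⊢
    have := arcsin_aux (-x) (by linarith) hx
    rw [Real.arcsin_neg, ← abs_neg] at this
    convert this using 2
    ring
  · simp [h]
  · rw [abs_of_pos h] at hx ⊢
    exact arcsin_aux x h hx
end
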